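/- For every finite group G there exists a finite simple graph Γ that is cubic (3-regular) such that the automorphism group of Γ is isomorphic to G. -/

import Mathlib

namespace CubicFrucht

universe u

/-- Index set of the units on the spine. -/
abbrev J (G : Type u) := Fin 3 ⊕ (G × Bool)

/-- Vertices. -/
inductive V (G : Type u) : Type u
  | x : G → J G → V G
  | a : G → J G → V G
  | b : G → J G → V G
  | c : G → J G → V G

variable {G : Type u} [Group G]

open V

def Mx (g : G) : J G → V G
  | .inl 0 => x g (.inl 1)
  | .inl 1 => x g (.inl 0)
  | .inl 2 => c g (.inl 0)
  | .inr (s, true) => x (g * s) (.inr (s, false))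
  | .inr (s, false) => x (g * s⁻¹) (.inr (s, true))

def Mc (g : G) : J G → V G
  | .inl 0 => x g (.inl 2)
  | .inl 1 => c g (.inl 2)
  | .inl 2 => c g (.inl 1)
  | .inr (s, t) => c g (.inr (s, !t))

variable (σ : Equiv.Perm (J G))

def n0 : V G → V G
  | x g j => b g (σ.symm j)
  | a g j => x g j
  | b g j => x g (σ j)
  | c g j => Mc g j

def n1 : V G → V G
  | x g j => a g j
  | a g j => b g j
  | b g j => a g j
  | c g j => a g j

def n2 : V G → V G
  | x g j => Mx g j
  | a g j => c g j
  | b g j => c g j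
  | c g j => b g j

def adj (v w : V G) : Prop := w = n0 σ v ∨ w = n1 v ∨ w = n2 v

lemma adj_symm (v w : V G) (h : adj σ v w) : adj σ w v := by
  rcases v with ⟨g, j⟩ | ⟨g, j⟩ | ⟨g, j⟩ | ⟨g, j⟩ <;> rcases h with h | h | h <;> subst h <;>
    try (simp [adj, n0, n1, n2]; done)
  · rcases j with j | ⟨s, t⟩
    · fin_cases j <;> simp [adj, n0, n1, n2, Mx, Mc]
    · cases t <;> simp [adj, n0, n1, n2, Mx]
  · rcases j with j | ⟨s, t⟩
    · fin_cases j <;> simp [adj, n0, n1, n2, Mx, Mc]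
    · cases t <;> simp [adj, n0, n1, n2, Mc]

lemma adj_irrefl (v : V G) : ¬ adj σ v v := by
  rcases v with ⟨g, j⟩ | ⟨g, j⟩ | ⟨g, j⟩ | ⟨g, j⟩ <;> try (simp [adj, n0, n1, n2]; done)
  all_goals
  · rcases j with j | ⟨s, t⟩
    · fin_cases j <;> simp [adj, n0, n1, n2, Mx, Mc]
    · cases t <;> simp [adj, n0, n1, n2, Mx, Mc]

def Γ : SimpleGraph (V G) where
  Adj := adj σ
  symm := ⟨adj_symm σ⟩
  loopless := ⟨adj_irrefl σ⟩

lemma ne01 (v : V G) : n0 σ v ≠ n1 v := by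
  rcases v with ⟨g, j⟩ | ⟨g, j⟩ | ⟨g, j⟩ | ⟨g, j⟩ <;> try (simp [n0, n1]; done)
  rcases j with j | ⟨s, t⟩
  · fin_cases j <;> simp [n0, n1, Mc]
  · simp [n0, n1, Mc]

lemma ne02 (v : V G) : n0 σ v ≠ n2 v := by
  rcases v with ⟨g, j⟩ | ⟨g, j⟩ | ⟨g, j⟩ | ⟨g, j⟩ <;> try (simp [n0, n2]; done)
  all_goals
  · rcases j with j | ⟨s, t⟩
    · fin_cases j <;> simp [n0, n2, Mc, Mx]
    · cases t <;> simp [n0, n2, Mc, Mx]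

lemma ne12 (v : V G) : n1 v ≠ n2 v := by
  rcases v with ⟨g, j⟩ | ⟨g, j⟩ | ⟨g, j⟩ | ⟨g, j⟩ <;> try (simp [n1, n2]; done)
  rcases j with j | ⟨s, t⟩
  · fin_cases j <;> simp [n1, n2, Mx]
  · cases t <;> simp [n1, n2, Mx]

/-- lies in a triangle -/
def T (v : V G) : Prop := ∃ u w, (Γ σ).Adj v u ∧ (Γ σ).Adj v w ∧ (Γ σ).Adj u w

section nb
variable {σ}
lemma nx {g : G} {j : J G} {w : V G} :
    (Γ σ).Adj (x g j) w ↔ w = b g (σ.symm j) ∨ w = a g j ∨ w = Mx g j := Iff.rfl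
lemma na {g : G} {j : J G} {w : V G} :
    (Γ σ).Adj (a g j) w ↔ w = x g j ∨ w = b g j ∨ w = c g j := Iff.rfl
lemma nb {g : G} {j : J G} {w : V G} :
    (Γ σ).Adj (b g j) w ↔ w = x g (σ j) ∨ w = a g j ∨ w = c g j := Iff.rfl
lemma nc {g : G} {j : J G} {w : V G} :
    (Γ σ).Adj (c g j) w ↔ w = Mc g j ∨ w = a g j ∨ w = b g j := Iff.rfl

lemma Ta (g : G) (j : J G) : T σ (a g j) := ⟨b g j, c g j, by simp [na, nb]⟩
lemma Tb (g : G) (j : J G) : T σ (b g j) := ⟨a g j, c g j, by simp [na, nb]⟩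
lemma Tc (g : G) (j : J G) : T σ (c g j) := ⟨a g j, b g j, by simp [na, nc]⟩

lemma Mx_cases (g : G) (j : J G) : (j = .inl 2 ∧ Mx g j = c g (.inl 0)) ∨
    (j ≠ .inl 2 ∧ ∃ g' j', j' ≠ j ∧ Mx g j = x g' j') := by
  rcases j with j | ⟨s, t⟩
  · fin_cases j <;> simp [Mx]
  · cases t <;> simp [Mx]

lemma Mc_cases (g : G) (j : J G) : (j = .inl 0 ∧ Mc g j = x g (.inl 2)) ∨
    (j ≠ .inl 0 ∧ ∃ j', j' ≠ j ∧ Mc g j = c g j') := by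
  rcases j with j | ⟨s, t⟩
  · fin_cases j <;> simp [Mc]
  · cases t <;> simp [Mc]

variable (hfix : ∀ j, σ j ≠ j) (h01 : σ (.inl 0) = .inl 1) (h12 : σ (.inl 1) = .inl 2)
  (h20 : σ (.inl 2) ≠ .inl 0)

include hfix in
lemma fix' (j : J G) : σ.symm j ≠ j := by
  intro h
  apply hfix j
  nth_rewrite 1 [← h]
  simp

include hfix h12 in
lemma Tx (g : G) (j : J G) : ¬ T σ (x g j) := by
  have hf := fix' hfix j
  have hs : σ.symm (.inl 2) = (.inl 1 : J G) := by rw [← h12]; simp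
  rintro ⟨u, w, h1, h2, h3⟩
  rw [nx] at h1 h2
  rcases Mx_cases g j with ⟨rfl, e⟩ | ⟨hj, g', j', hj', e⟩
  · rw [e] at h1 h2
    rcases h1 with rfl | rfl | rfl <;> rcases h2 with rfl | rfl | rfl <;>
      simp [na, nb, nc, hs, Mc] at h3
  · rw [e] at h1 h2
    rcases h1 with rfl | rfl | rfl <;> rcases h2 with rfl | rfl | rfl <;>
      simp [na, nb, nx, hf, hf.symm, hj', hj'.symm] at h3
    all_goals rcases Mx_cases g' j' with ⟨_, e2⟩ | ⟨_, _, _, _, e2⟩ <;> simp [e2] at h3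

lemma T_map (φ : Γ σ ≃g Γ σ) {v : V G} (h : T σ v) : T σ (φ v) := by
  obtain ⟨u, w, h1, h2, h3⟩ := h
  exact ⟨φ u, φ w, φ.map_adj_iff.2 h1, φ.map_adj_iff.2 h2, φ.map_adj_iff.2 h3⟩

lemma T_map_iff (φ : Γ σ ≃g Γ σ) {v : V G} : T σ (φ v) ↔ T σ v := by
  refine ⟨fun h => ?_, T_map φ⟩
  have := T_map φ.symm h
  simpa using this

lemma adj_map (φ : Γ σ ≃g Γ σ) {v w v' : V G} (h : (Γ σ).Adj v w) (e : φ v = v') :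
    (Γ σ).Adj v' (φ w) := by
  rw [← e]; exact φ.map_adj_iff.2 h

variable (hT : ∀ (g : G) (j : J G), ¬ T σ (x g j))

include hT in
lemma root_type (φ : Γ σ ≃g Γ σ) (g : G) : ∃ h, φ (x g (.inl 2)) = x h (.inl 2) := by
  have h1 : ¬ T σ (φ (x g (.inl 2))) := by rw [T_map_iff]; exact hT _ _
  have h2 : ∀ u, (Γ σ).Adj (φ (x g (.inl 2))) u → T σ u := by
    intro u hu
    have hu' : (Γ σ).Adj (x g (.inl 2)) (φ.symm u) := by
      rw [← φ.map_adj_iff]; simpa using hu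
    have : T σ (φ.symm u) := by
      rw [nx] at hu'
      rcases hu' with e | e | e <;> rw [e]
      · exact Tb _ _
      · exact Ta _ _
      · exact Tc _ _
    rwa [T_map_iff] at this
  generalize φ (x g (.inl 2)) = v at h1 h2
  rcases v with ⟨h, j⟩ | ⟨h, j⟩ | ⟨h, j⟩ | ⟨h, j⟩
  · rcases Mx_cases h j with ⟨rfl, e⟩ | ⟨hj, g', j', hj', e⟩
    · exact ⟨h, rfl⟩
    · exact absurd (h2 (x g' j') (by rw [nx, e]; simp)) (hT _ _)
  · exact absurd (Ta _ _) h1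
  · exact absurd (Tb _ _) h1
  · exact absurd (Tc _ _) h1

/-- adjacent to a vertex all of whose neighbourhood lies in triangles -/
def D (σ : Equiv.Perm (J G)) (v : V G) : Prop :=
  ∃ u, (Γ σ).Adj v u ∧ T σ u ∧ ∀ w, (Γ σ).Adj u w → T σ w

lemma D_map (φ : Γ σ ≃g Γ σ) {v : V G} (h : D σ v) : D σ (φ v) := by
  obtain ⟨u, h1, h2, h3⟩ := h
  refine ⟨φ u, φ.map_adj_iff.2 h1, T_map φ h2, fun w hw => ?_⟩
  have : (Γ σ).Adj u (φ.symm w) := by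
    rw [← φ.map_adj_iff]; simpa using hw
  have := T_map φ (h3 _ this)
  simpa using this

lemma D_map_iff (φ : Γ σ ≃g Γ σ) {v : V G} : D σ (φ v) ↔ D σ v := by
  refine ⟨fun h => ?_, D_map φ⟩
  have := D_map φ.symm h
  simpa using this

lemma Call (g : G) (j : J G) (hj : j ≠ .inl 0) (w : V G) (h : (Γ σ).Adj (c g j) w) : T σ w := by
  rw [nc] at h
  rcases Mc_cases g j with ⟨h0, _⟩ | ⟨_, j', _, e⟩
  · exact absurd h0 hj
  · rw [e] at h
    rcases h with rfl | rfl | rfl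
    · exact Tc _ _
    · exact Ta _ _
    · exact Tb _ _

lemma Da (g : G) (j : J G) (hj : j ≠ .inl 0) : D σ (a g j) :=
  ⟨c g j, by simp [na], Tc _ _, Call g j hj⟩

lemma Db (g : G) (j : J G) (hj : j ≠ .inl 0) : D σ (b g j) :=
  ⟨c g j, by simp [nb], Tc _ _, Call g j hj⟩

include hT in
lemma nDc (g : G) : ¬ D σ (c g (.inl 0)) := by
  rintro ⟨u, h1, h2, h3⟩
  rw [nc] at h1
  rcases h1 with rfl | rfl | rfl
  · exact hT _ _ h2
  · exact hT g (.inl 0) (h3 _ (by simp [na]))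
  · exact hT g (σ (.inl 0)) (h3 _ (by simp [nb]))

/-- on a short cycle -/
def E (σ : Equiv.Perm (J G)) (v z : V G) : Prop :=
  ∃ u w y, (Γ σ).Adj v u ∧ (Γ σ).Adj u w ∧ (Γ σ).Adj w y ∧ (Γ σ).Adj y z ∧
    T σ u ∧ ¬ T σ w ∧ T σ y

lemma E_map (φ : Γ σ ≃g Γ σ) {v z : V G} (h : E σ v z) : E σ (φ v) (φ z) := by
  obtain ⟨u, w, y, h1, h2, h3, h4, h5, h6, h7⟩ := h
  exact ⟨φ u, φ w, φ y, φ.map_adj_iff.2 h1, φ.map_adj_iff.2 h2, φ.map_adj_iff.2 h3,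
    φ.map_adj_iff.2 h4, T_map φ h5, by rwa [T_map_iff], T_map φ h7⟩

include hT h01 in
lemma Eb (g : G) : E σ (b g (.inl 1)) (c g (.inl 0)) := by
  have hs : σ.symm (.inl 1) = (.inl 0 : J G) := by rw [← h01]; simp
  exact ⟨a g (.inl 1), x g (.inl 1), b g (.inl 0), by simp [nb], by simp [na],
    by simp [nx, hs], by simp [nb], Ta _ _, hT _ _, Tb _ _⟩

include hT h20 hfix in
lemma nEa (g : G) : ¬ E σ (a g (.inl 2)) (c g (.inl 0)) := by
  rintro ⟨u, w, y, h1, h2, h3, h4, h5, h6, h7⟩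
  rw [na] at h1
  rcases h1 with rfl | rfl | rfl
  · exact hT _ _ h5
  · rw [nb] at h2
    rcases h2 with rfl | rfl | rfl
    · rw [nx] at h3
      rcases h3 with rfl | rfl | rfl
      · simp [nb, Mc] at h4
      · simp [na, h20, h20.symm] at h4
      · rcases Mx_cases g (σ (.inl 2)) with ⟨e, _⟩ | ⟨_, g', j', _, e⟩
        · exact hfix _ e
        · rw [e] at h7
          exact hT _ _ h7
    · exact h6 (Ta _ _)
    · exact h6 (Tc _ _)
  · exact h6 (Call _ _ (by simp) _ h2)

include hT hfix h01 h12 h20 in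
lemma root_nbrs (φ : Γ σ ≃g Γ σ) (g h : G) (H : φ (x g (.inl 2)) = x h (.inl 2)) :
    φ (c g (.inl 0)) = c h (.inl 0) ∧ φ (a g (.inl 2)) = a h (.inl 2) := by
  have hs : σ.symm (.inl 2) = (.inl 1 : J G) := by rw [← h12]; simp
  have k1 := adj_map φ (w := c g (.inl 0)) (by simp [nx, Mx]) H
  have k2 := adj_map φ (w := a g (.inl 2)) (by simp [nx]) H
  have k3 := adj_map φ (w := b g (.inl 1)) (by simp [nx, hs]) H
  rw [nx, hs] at k1 k2 k3
  simp only [Mx] at k1 k2 k3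
  have hc : φ (c g (.inl 0)) = c h (.inl 0) := by
    have : ¬ D σ (φ (c g (.inl 0))) := by rw [D_map_iff]; exact nDc hT g
    rcases k1 with e | e | e
    · rw [e] at this; exact absurd (Db _ _ (by simp)) this
    · rw [e] at this; exact absurd (Da _ _ (by simp)) this
    · exact e
  have hb : φ (b g (.inl 1)) = b h (.inl 1) := by
    have hE := E_map φ (Eb h01 hT g)
    rw [hc] at hE
    rcases k3 with e | e | e
    · exact e
    · rw [e] at hE; exact absurd hE (nEa hfix h20 hT h)
    · have := φ.injective (e.trans hc.symm); simp at this
  refine ⟨hc, ?_⟩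
  rcases k2 with e | e | e
  · have := φ.injective (e.trans hb.symm); simp at this
  · exact e
  · have := φ.injective (e.trans hc.symm); simp at this

include hT in
lemma step (φ : Γ σ ≃g Γ σ) (g h : G) (j : J G) (hc : φ (c g (.inl 0)) = c h (.inl 0))
    (Ha : φ (a g j) = a h j) :
    φ (b g j) = b h j ∧ φ (c g j) = c h j := by
  have k1 := adj_map φ (w := b g j) (by simp [na]) Ha
  have k2 := adj_map φ (w := c g j) (by simp [na]) Ha
  rw [na] at k1 k2
  have tb := T_map φ (Tb (σ := σ) g j)
  have tc := T_map φ (Tc (σ := σ) g j)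
  by_cases hj : j = .inl 0
  · subst hj
    refine ⟨?_, hc⟩
    rcases k1 with e | e | e
    · rw [e] at tb; exact absurd tb (hT _ _)
    · exact e
    · have := φ.injective (e.trans hc.symm); simp at this
  · have hb : φ (b g j) = b h j := by
      rcases k1 with e | e | e
      · rw [e] at tb; exact absurd tb (hT _ _)
      · exact e
      · have : (Γ σ).Adj (c h j) (φ (x g (σ j))) := adj_map φ (by simp [nb]) e
        have := Call _ _ hj _ this
        rw [T_map_iff] at this
        exact absurd this (hT _ _)
    refine ⟨hb, ?_⟩
    rcases k2 with e | e | e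
    · rw [e] at tc; exact absurd tc (hT _ _)
    · have := φ.injective (e.trans hb.symm); simp at this
    · exact e

include hT in
lemma step2 (φ : Γ σ ≃g Γ σ) (g h : G) (j : J G) (Hb : φ (b g j) = b h j) :
    φ (x g (σ j)) = x h (σ j) := by
  have k := adj_map φ (w := x g (σ j)) (by simp [nb]) Hb
  have t : ¬ T σ (φ (x g (σ j))) := by rw [T_map_iff]; exact hT _ _
  rw [nb] at k
  rcases k with e | e | e
  · exact e
  · rw [e] at t; exact absurd (Ta _ _) t
  · rw [e] at t; exact absurd (Tc _ _) t

include hT in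
lemma step3 (φ : Γ σ ≃g Γ σ) (g h : G) (j : J G) (hj : σ j ≠ .inl 2) (Hb : φ (b g j) = b h j)
    (Hx : φ (x g (σ j)) = x h (σ j)) : φ (a g (σ j)) = a h (σ j) := by
  have k := adj_map φ (w := a g (σ j)) (by simp [nx]) Hx
  have t := T_map φ (Ta (σ := σ) g (σ j))
  rw [nx] at k
  simp only [Equiv.symm_apply_apply] at k
  rcases k with e | e | e
  · have := φ.injective (e.trans Hb.symm); simp at this
  · exact e
  · rcases Mx_cases h (σ j) with ⟨h2, _⟩ | ⟨_, g', j', _, e'⟩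
    · exact absurd h2 hj
    · rw [e, e'] at t; exact absurd t (hT _ _)

variable (hcyc : ∀ P : J G → Prop, P (.inl 2) → (∀ j, P j → P (σ j)) → ∀ j, P j)

include hT hfix h01 h12 h20 hcyc in
lemma all_types (φ : Γ σ ≃g Γ σ) (g h : G) (H : φ (x g (.inl 2)) = x h (.inl 2)) (j : J G) :
    φ (x g j) = x h j ∧ φ (a g j) = a h j ∧ φ (b g j) = b h j ∧ φ (c g j) = c h j := by
  obtain ⟨hc, ha⟩ := root_nbrs hfix h01 h12 h20 hT φ g h H
  have key : ∀ j, φ (x g j) = x h j ∧ φ (a g j) = a h j := by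
    apply hcyc
    · exact ⟨H, ha⟩
    · intro j ⟨_, h2⟩
      by_cases e : σ j = .inl 2
      · rw [e]; exact ⟨H, ha⟩
      · have hb := (step hT φ g h j hc h2).1
        have hx := step2 hT φ g h j hb
        exact ⟨hx, step3 hT φ g h j e hb hx⟩
  obtain ⟨h1, h2⟩ := key j
  exact ⟨h1, h2, step hT φ g h j hc h2⟩

/-- left translation on vertices -/
def tr (k : G) : V G → V G
  | x g j => x (k * g) j
  | a g j => a (k * g) j
  | b g j => b (k * g) j
  | c g j => c (k * g) j

lemma tr_mul (k l : G) (v : V G) : tr (k * l) v = tr k (tr l v) := by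
  cases v <;> simp [tr, mul_assoc]

lemma tr_one (v : V G) : tr 1 v = v := by
  cases v <;> simp [tr]

lemma tr_Mx (k g : G) (j : J G) : tr k (Mx g j) = Mx (k * g) j := by
  rcases j with j | ⟨s, t⟩
  · fin_cases j <;> simp [Mx, tr]
  · cases t <;> simp [Mx, tr, mul_assoc]

lemma tr_Mc (k g : G) (j : J G) : tr k (Mc g j) = Mc (k * g) j := by
  rcases j with j | ⟨s, t⟩
  · fin_cases j <;> simp [Mc, tr]
  · cases t <;> simp [Mc, tr]

lemma tr_adj (k : G) (v w : V G) (h : (Γ σ).Adj v w) : (Γ σ).Adj (tr k v) (tr k w) := by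
  have e0 : n0 σ (tr k v) = tr k (n0 σ v) := by
    cases v <;> first | exact (tr_Mc _ _ _).symm | rfl
  have e1 : n1 (tr k v) = tr k (n1 v) := by cases v <;> simp [tr, n1]
  have e2 : n2 (tr k v) = tr k (n2 v) := by
    cases v <;> first | exact (tr_Mx _ _ _).symm | rfl
  rcases h with rfl | rfl | rfl
  · exact Or.inl e0.symm
  · exact Or.inr (Or.inl e1.symm)
  · exact Or.inr (Or.inr e2.symm)

def L (σ : Equiv.Perm (J G)) : G →* (Γ σ ≃g Γ σ) where
  toFun k :=
    { toFun := tr k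
      invFun := tr k⁻¹
      left_inv := fun v => by rw [← tr_mul]; simp [tr_one]
      right_inv := fun v => by rw [← tr_mul]; simp [tr_one]
      map_rel_iff' := by
        intro v w
        refine ⟨fun h => ?_, tr_adj k v w⟩
        have := tr_adj k⁻¹ _ _ h
        simpa [← tr_mul, tr_one] using this }
  map_one' := by ext v; exact tr_one v
  map_mul' k l := by ext v; exact tr_mul k l v

lemma L_inj : Function.Injective (L σ) := by
  intro k l h
  have : tr k (x 1 (.inl 2)) = tr l (x 1 (.inl 2)) := 
    congrArg (fun φ : Γ σ ≃g Γ σ => φ (x 1 (.inl 2))) h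
  simpa [tr] using this

include hT hfix h01 h12 h20 hcyc in
lemma L_surj : Function.Surjective (L σ) := by
  intro φ
  choose f hf using root_type hT φ
  have A := fun g => all_types hfix h01 h12 h20 hT hcyc φ g (f g) (hf g)
  have hmul : ∀ g s, f (g * s) = f g * s := by
    intro g s
    have k := adj_map φ (w := x (g * s) (.inr (s, false))) (by simp [nx, Mx])
      (A g (.inr (s, true))).1
    rw [(A (g * s) _).1, nx] at k
    simpa [Mx] using k
  have h1 : ∀ g, f g = f 1 * g := fun g => by simpa using hmul 1 g
  refine ⟨f 1, ?_⟩
  ext v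
  change tr (f 1) v = φ v
  rcases v with ⟨g, j⟩ | ⟨g, j⟩ | ⟨g, j⟩ | ⟨g, j⟩
  · rw [(A g j).1, h1 g]; rfl
  · rw [(A g j).2.1, h1 g]; rfl
  · rw [(A g j).2.2.1, h1 g]; rfl
  · rw [(A g j).2.2.2, h1 g]; rfl

end nb

lemma exists_sigma (G : Type u) [Group G] [Finite G] : ∃ σ : Equiv.Perm (J G),
    (∀ j, σ j ≠ j) ∧ σ (.inl 0) = .inl 1 ∧ σ (.inl 1) = .inl 2 ∧ σ (.inl 2) ≠ .inl 0 ∧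
    ∀ P : J G → Prop, P (.inl 2) → (∀ j, P j → P (σ j)) → ∀ j, P j := by
  obtain ⟨n, ⟨e0⟩⟩ := Finite.exists_equiv_fin (G × Bool)
  have hn : 0 < n := Fin.pos (e0 (1, true))
  obtain ⟨m, rfl⟩ : ∃ m, n = m + 1 := ⟨n - 1, by omega⟩
  let e : J G ≃ Fin (3 + m + 1) := (Equiv.sumCongr (Equiv.refl _) e0).trans finSumFinEquiv
  have v : ∀ i : Fin 3, (e (.inl i)).val = i.val := by intro i; simp [e]
  let σ : Equiv.Perm (J G) := (e.trans (finRotate _)).trans e.symm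
  have hσ : ∀ j, e (σ j) = finRotate _ (e j) := by intro j; simp [σ]
  have rot : ∀ i : Fin (3 + m + 1), (finRotate _ i).val = if i.val = 3 + m then 0 else i.val + 1 := by
    intro i
    rw [finRotate_succ_apply, Fin.val_add_one]
    simp [Fin.ext_iff]
  have hv : ∀ j, (e (σ j)).val = if (e j).val = 3 + m then 0 else (e j).val + 1 := by
    intro j; rw [hσ, rot]
  have ex : ∀ i j, (e i).val = (e j).val → i = j := fun i j h => e.injective (Fin.ext h)
  have v0 := v 0
  have v1 := v 1
  have v2 := v 2
  simp only [Fin.val_zero, Fin.val_one, Fin.val_two] at v0 v1 v2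
  refine ⟨σ, ?_, ?_, ?_, ?_, ?_⟩
  · intro j h
    have := hv j
    rw [h] at this
    split_ifs at this <;> omega
  · apply ex; rw [hv, v0, v1]; split_ifs <;> omega
  · apply ex; rw [hv, v1, v2]; split_ifs <;> omega
  · intro h
    have := hv (.inl 2)
    rw [h, v0, v2] at this
    split_ifs at this <;> omega
  · intro P h2 hs
    have up : ∀ k j, (e j).val = 2 + k → P j := by
      intro k
      induction k with
      | zero => intro j h; rw [ex j (.inl 2) (by omega)]; exact h2
      | succ k ih =>
        intro j h
        have hlt := (e j).isLt
        have := ih (e.symm ⟨2 + k, by omega⟩) (by simp)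
        have h' := hs _ this
        have : σ (e.symm ⟨2 + k, by omega⟩) = j := by
          apply ex
          rw [hv]
          simp only [Equiv.apply_symm_apply]
          split_ifs <;> omega
        rwa [this] at h'
    have p0 : P (.inl 0) := by
      have := hs _ (up (1 + m) (e.symm ⟨3 + m, by omega⟩) (by simp; omega))
      have h : σ (e.symm ⟨3 + m, by omega⟩) = .inl 0 := by
        apply ex
        rw [hv, v0]
        simp
      rwa [h] at this
    have p1 : P (.inl 1) := by
      have := hs _ p0
      have h : σ (.inl 0) = .inl 1 := by
        apply ex; rw [hv, v0, v1]; split_ifs <;> omega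
      rwa [h] at this
    intro j
    rcases lt_or_ge (e j).val 2 with h | h
    · have h' : (e j).val = 0 ∨ (e j).val = 1 := by omega
      rcases h' with h' | h'
      · rw [ex j (.inl 0) (by omega)]; exact p0
      · rw [ex j (.inl 1) (by omega)]; exact p1
    · exact up ((e j).val - 2) j (by omega)

def toProd : V G → Fin 4 × G × J G
  | x g j => (0, g, j)
  | a g j => (1, g, j)
  | b g j => (2, g, j)
  | c g j => (3, g, j)

lemma toProd_inj : Function.Injective (toProd (G := G)) := by
  intro v w h
  cases v <;> cases w <;> simp_all [toProd]

instance [Finite G] : Finite (V G) := Finite.of_injective _ toProd_inj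

end CubicFrucht

open scoped Classical in
/-- **Frucht's theorem for cubic graphs.** For every finite group `G` there exists a
finite simple graph `Γ` (here: on some `Fin n`) that is cubic (3-regular) and whose
automorphism group (the group of graph isomorphisms `Γ ≃g Γ` under composition) is
isomorphic to `G`. -/
theorem exists_cubic_graph_aut_mulEquiv (G : Type*) [Group G] [Finite G] :
    ∃ (n : ℕ) (Γ : SimpleGraph (Fin n)),
      Γ.IsRegularOfDegree 3 ∧ Nonempty ((Γ ≃g Γ) ≃* G) := by
  obtain ⟨σ, hfix, h01, h12, h20, hcyc⟩ := CubicFrucht.exists_sigma G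
  have hT := CubicFrucht.Tx hfix h12
  obtain ⟨n, ⟨e⟩⟩ := Finite.exists_equiv_fin (CubicFrucht.V G)
  let Δ : SimpleGraph (Fin n) := (CubicFrucht.Γ σ).comap e.symm
  let I : Δ ≃g CubicFrucht.Γ σ := ⟨e.symm, Iff.rfl⟩
  refine ⟨n, Δ, ?_, ⟨?_⟩⟩
  · intro v
    rw [← SimpleGraph.card_neighborFinset_eq_degree]
    apply Finset.card_eq_three.2
    have hN : Δ.neighborFinset v = {e (CubicFrucht.n0 σ (e.symm v)),
        e (CubicFrucht.n1 (e.symm v)), e (CubicFrucht.n2 (e.symm v))} := by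
      ext w
      rw [SimpleGraph.mem_neighborFinset]
      simp only [Finset.mem_insert, Finset.mem_singleton, ← Equiv.symm_apply_eq]
      exact Iff.rfl
    refine ⟨_, _, _, e.injective.ne (CubicFrucht.ne01 σ _), e.injective.ne (CubicFrucht.ne02 σ _),
      e.injective.ne (CubicFrucht.ne12 (e.symm v)), ?_⟩
    convert hN
  · let C : (Δ ≃g Δ) ≃* (CubicFrucht.Γ σ ≃g CubicFrucht.Γ σ) :=
      { toFun := fun φ => (I.symm.trans φ).trans I
        invFun := fun φ => (I.trans φ).trans I.symm
        left_inv := fun φ => by ext v; simp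
        right_inv := fun φ => by ext v; simp
        map_mul' := fun φ ψ => by ext v; simp [RelIso.mul_apply] }
    exact C.trans (MulEquiv.ofBijective (CubicFrucht.L σ) ⟨CubicFrucht.L_inj,
      CubicFrucht.L_surj hfix h01 h12 h20 hT hcyc⟩).symm
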